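/- arXiv:1109.3651 — 4 statements merged into one kernel-verified Lean document; each statement's English description precedes it below -/
import Mathlib

section
/- Let x, y, z, w be nonnegative real numbers with x·w > y·z. Then the binary constraint f given by f(0,0)=x, f(0,1)=y, f(1,0)=z, f(1,1)=w belongs to IM_opt; concretely, there exist unary functions u, v : {0,1} → ℝ_{≥0} and real numbers λ₁, λ₂ ∈ [0,1) such that for all a, b ∈ {0,1}: f(a,b) = u(a)·v(b)·(λ₁ if (a,b)=(1,0), else 1)·(λ₂ if (a,b)=(0,1), else 1). -/
open scoped NNReal

/-- If `x·w > y·z` for nonnegative reals, then the binary constraint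
`f = (x, y, z, w)` belongs to `IM_opt`: it decomposes as a product of two unary
constraints and two "implication-like" factors `(1,1,λᵢ,1)` with `λᵢ ∈ [0,1)`. -/
theorem stmt0 (x y z w : ℝ≥0) (hxw : y * z < x * w)
    (f : Bool → Bool → ℝ≥0)
    (h00 : f false false = x) (h01 : f false true = y)
    (h10 : f true false = z) (h11 : f true true = w) :
    ∃ (u v : Bool → ℝ≥0) (l₁ l₂ : ℝ≥0), l₁ < 1 ∧ l₂ < 1 ∧
      ∀ a b : Bool,
        f a b = u a * v b *
          (if a = true ∧ b = false then l₁ else 1) *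
          (if a = false ∧ b = true then l₂ else 1) := by
  have hpos : 0 < x * w := lt_of_le_of_lt zero_le hxw
  have hx0 : x ≠ 0 := by rintro rfl; simp at hpos
  have hw0 : w ≠ 0 := by rintro rfl; simp at hpos
  have hx : 0 < x := pos_iff_ne_zero.mpr hx0
  have hw : 0 < w := pos_iff_ne_zero.mpr hw0
  obtain ⟨t, ht, h1, h2⟩ : ∃ t : ℝ≥0, 0 < t ∧ z * t < w ∧ y < x * t := by
    refine ⟨(y + x * w) / (x * (z + 1)), by positivity, ?_, ?_⟩
    · rw [← mul_div_assoc, div_lt_iff₀ (by positivity)]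
      calc z * (y + x * w) = y * z + x * w * z := by ring
        _ < x * w + x * w * z := by gcongr
        _ = w * (x * (z + 1)) := by ring
    · rw [← mul_div_assoc, lt_div_iff₀ (by positivity)]
      calc y * (x * (z + 1)) = x * (y * z + y) := by ring
        _ < x * (x * w + y) := by gcongr
        _ = x * (y + x * w) := by ring
  have ht0 : t ≠ 0 := ht.ne'
  refine ⟨fun a => if a then w / t else x, fun b => if b then t else 1,
    z * t / w, y / (x * t), ?_, ?_, ?_⟩
  · rwa [div_lt_one hw]
  · rwa [div_lt_one (by positivity)]
  · rintro (_ | _) (_ | _)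
    · simp [h00]
    · simp [h01]; field_simp
    · simp [h10]; field_simp
    · simp [h11]; try field_simp
end

section
/- Let V be a finite set of Boolean variables, let T be a finite list of triples (p,q,λ) with p,q ∈ V distinct and λ ∈ (0,1), and for each v ∈ V let u_v : {0,1} → ℝ_{≥0} be a unary constraint with u_v(0) > 0. Define the CSP measure M(σ) = (∏_{(p,q,λ)∈T} g_λ(σ(p),σ(q))) · (∏_{v∈V} u_v(σ(v))), where g_λ = (1,1,λ,1), i.e., g_λ(a,b)=λ if (a,b)=(1,0) and 1 otherwise. Consider the MAX-PROD-FLOW instance whose directed graph has, for each triple (p,q,λ) ∈ T, an edge (q,p) with flow rate ρ = 1/λ ≥ 1, and whose influx rates are w_v = u_v(1)/u_v(0); its measure is F(σ) = (∏_{edges (q,p) with σ(q) ≥ σ(p)} ρ) · (∏_{v : σ(v)=1} w_v). Then for every assignment σ : V → {0,1}, M(σ) = C · F(σ), where C = (∏_{(p,q,λ)∈T} λ) · (∏_{v∈V} u_v(0)) > 0. In particular, the maximum of M over all assignments equals C times the maximum of F over all assignments. -/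
open scoped NNReal

/-- A multiplicatively-measured CSP whose binary constraints are of the
form `g_λ = (1,1,λ,1)` with `λ ∈ (0,1)` (listed in `T` as triples `(p,q,λ)`) and whose unary
constraints `u_v` satisfy `u_v(0) > 0` has measure `M(σ)` equal to `C · F(σ)`, where `F` is
the measure of the MAX-PROD-FLOW instance with an edge `(q,p)` of flow rate `1/λ ≥ 1` for
each triple `(p,q,λ)`, influx rates `w_v = u_v(1)/u_v(0)`, and
`C = (∏_{(p,q,λ)∈T} λ) · (∏_v u_v(0)) > 0`.  In particular the maxima of `M` and of `C · F`
over all assignments coincide. -/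
theorem stmt3 {V : Type} [Fintype V] [DecidableEq V] (T : List (V × V × ℝ≥0))
    (hT : ∀ t ∈ T, t.1 ≠ t.2.1 ∧ 0 < t.2.2 ∧ t.2.2 < 1)
    (u : V → Bool → ℝ≥0) (hu : ∀ v, 0 < u v false) :
    -- the CSP measure
    let M : (V → Bool) → ℝ≥0 := fun σ =>
      (T.map fun t => if σ t.1 = true ∧ σ t.2.1 = false then t.2.2 else 1).prod *
        ∏ v : V, u v (σ v)
    -- the MAX-PROD-FLOW measure: edge (q,p) with rate 1/λ counted when σ q ≥ σ p,
    -- influx rate u_v(1)/u_v(0) counted when σ v = 1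
    let F : (V → Bool) → ℝ≥0 := fun σ =>
      (T.map fun t => if σ t.1 ≤ σ t.2.1 then (t.2.2)⁻¹ else 1).prod *
        ∏ v : V, (if σ v then u v true / u v false else 1)
    let C : ℝ≥0 := (T.map fun t => t.2.2).prod * ∏ v : V, u v false
    0 < C ∧ (∀ σ : V → Bool, M σ = C * F σ) ∧
      Finset.univ.sup M = C * Finset.univ.sup F := by
  intro M F C
  have hM : ∀ σ : V → Bool, M σ = C * F σ := by
    intro σ
    have h1 : (T.map fun t => if σ t.1 = true ∧ σ t.2.1 = false then t.2.2 else 1).prod =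
        (T.map fun t => t.2.2).prod *
          (T.map fun t => if σ t.1 ≤ σ t.2.1 then (t.2.2)⁻¹ else 1).prod := by
      rw [← List.prod_map_mul]
      congr 1
      apply List.map_congr_left
      intro t ht
      have h0 : t.2.2 ≠ 0 := (hT t ht).2.1.ne'
      cases h : σ t.1 <;> cases h' : σ t.2.1 <;> simp [h0]
    have h2 : ∏ v : V, u v (σ v) = (∏ v : V, u v false) *
        ∏ v : V, (if σ v then u v true / u v false else 1) := by
      rw [← Finset.prod_mul_distrib]
      apply Finset.prod_congr rfl
      intro v _
      have h0 : u v false ≠ 0 := (hu v).ne'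
      cases h : σ v
      · simp
      · simp [mul_div_cancel₀, h0]
    simp only [M, F, C]
    rw [h1, h2]
    exact mul_mul_mul_comm _ _ _ _
  refine ⟨?_, hM, ?_⟩
  · apply mul_pos
    · apply List.prod_pos
      intro a ha
      obtain ⟨t, ht, rfl⟩ := List.mem_map.1 ha
      exact (hT t ht).2.1
    · exact Finset.prod_pos fun v _ => hu v
  · rw [NNReal.mul_finset_sup]
    exact Finset.sup_congr rfl fun σ _ => hM σ
end

section
/- Let H be a MAX-PROD-CSP instance over a finite set V of Boolean variables all of whose constraints belong to AF or are unary. Then there exist a family of unary functions u_v : {0,1} → ℝ_{≥0} (v ∈ V) and an affine subset A ⊆ GF(2)^V (the solution set of a system of linear equations over GF(2) in the variables V) such that the measure of every assignment σ : V → {0,1} satisfies m(σ) = 1_A(σ) · ∏_{v∈V} u_v(σ(v)). -/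
open scoped NNReal

/-- The canonical embedding of Booleans into GF(2). -/
def boolZ : Bool → ZMod 2 := fun b => if b then 1 else 0

/-- A binary relation `R ⊆ {0,1}²` is affine if it is the solution set of a (possibly empty
or inconsistent) system of linear equations over GF(2). -/
def IsAffine2 (R : Set (Bool × Bool)) : Prop :=
  ∃ (m : ℕ) (a b c : Fin m → ZMod 2),
    R = {p : Bool × Bool | ∀ i, a i * boolZ p.1 + b i * boolZ p.2 = c i}

open Classical in
/-- The class AF: constraints of the form `g(x₁,…,x_k) · ∏_{j ≠ i} R_j(x_i, x_j)` where `g`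
is degenerate (a product of unary constraints) and each `R_j` is an affine relation. -/
def InAF {k : ℕ} (f : (Fin k → Bool) → ℝ≥0) : Prop :=
  ∃ (u : Fin k → Bool → ℝ≥0) (i : Fin k) (R : Fin k → Set (Bool × Bool)),
    (∀ j, IsAffine2 (R j)) ∧
    ∀ x : Fin k → Bool,
      f x = (∏ j, u j (x j)) *
        ∏ j ∈ Finset.univ.filter (fun j => j ≠ i),
          (if (x i, x j) ∈ R j then 1 else 0)

/-- An affine subset of GF(2)^V: the solution set of a system of linear equations. -/
def IsAffineSet {n : ℕ} (A : Set (Fin n → ZMod 2)) : Prop :=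
  ∃ (m : ℕ) (M : Fin m → Fin n → ZMod 2) (b : Fin m → ZMod 2),
    A = {x : Fin n → ZMod 2 | ∀ i, (∑ j, M i j * x j) = b i}

/-- A MAX-PROD-CSP instance over Boolean variables indexed by `Fin n`. -/
abbrev CSPInstance (n : ℕ) : Type :=
  List (Σ k : ℕ, ((Fin k → Bool) → ℝ≥0) × (Fin k → Fin n))

/-- The multiplicative measure of an assignment `σ` for an instance `H`. -/
def cspMeasure {n : ℕ} (H : CSPInstance n) (σ : Fin n → Bool) : ℝ≥0 :=
  (H.map fun c => c.2.1 fun j => σ (c.2.2 j)).prod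

theorem isAffineSet_of_fintype {n : ℕ} {ι : Type} [Fintype ι] (M : ι → Fin n → ZMod 2)
    (b : ι → ZMod 2) : IsAffineSet {x : Fin n → ZMod 2 | ∀ i, (∑ j, M i j * x j) = b i} := by
  refine ⟨Fintype.card ι, fun i => M ((Fintype.equivFin ι).symm i),
    fun i => b ((Fintype.equivFin ι).symm i), ?_⟩
  ext x
  simp only [Set.mem_setOf_eq]
  exact ((Fintype.equivFin ι).symm.forall_congr_left (p := fun i => ∑ j, M ((Fintype.equivFin ι).symm i) j * x j = b ((Fintype.equivFin ι).symm i)) |>.trans (by simp)).symm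

theorem isAffineSet_inter {n : ℕ} {A B : Set (Fin n → ZMod 2)} (hA : IsAffineSet A)
    (hB : IsAffineSet B) : IsAffineSet (A ∩ B) := by
  obtain ⟨m, M, b, rfl⟩ := hA
  obtain ⟨m', M', b', rfl⟩ := hB
  have h := isAffineSet_of_fintype (Sum.elim M M') (Sum.elim b b')
  convert h using 1
  ext x
  simp

open Classical in
/-- A function of assignments that factors as required. -/
def Good {n : ℕ} (F : (Fin n → Bool) → ℝ≥0) : Prop :=
  ∃ (u : Fin n → Bool → ℝ≥0) (A : Set (Fin n → ZMod 2)), IsAffineSet A ∧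
      ∀ σ : Fin n → Bool,
        F σ = (if (fun v => boolZ (σ v)) ∈ A then 1 else 0) * ∏ v, u v (σ v)

theorem isAffineSet_univ {n : ℕ} : IsAffineSet (Set.univ : Set (Fin n → ZMod 2)) :=
  ⟨0, fun _ _ => 0, fun _ => 0, by ext x; simp⟩

theorem good_one {n : ℕ} : Good (fun _ : Fin n → Bool => 1) :=
  ⟨fun _ _ => 1, Set.univ, isAffineSet_univ, by simp⟩

theorem good_mul {n : ℕ} {F G : (Fin n → Bool) → ℝ≥0} (hF : Good F) (hG : Good G) :
    Good (fun σ => F σ * G σ) := by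
  obtain ⟨u, A, hA, h⟩ := hF
  obtain ⟨u', A', hA', h'⟩ := hG
  refine ⟨fun v b => u v b * u' v b, A ∩ A', isAffineSet_inter hA hA', fun σ => ?_⟩
  simp only [h, h', Finset.prod_mul_distrib, Set.mem_inter_iff]
  split_ifs <;> simp_all

theorem good_prod {n : ℕ} {ι : Type} (s : Finset ι) (F : ι → (Fin n → Bool) → ℝ≥0)
    (hF : ∀ i, Good (F i)) : Good (fun σ => ∏ i ∈ s, F i σ) := by
  classical
  induction s using Finset.induction_on with
  | empty => simpa using good_one
  | insert a s ha ih =>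
    simp only [Finset.prod_insert ha]
    exact good_mul (hF a) ih

theorem good_unary {n : ℕ} (v : Fin n) (g : Bool → ℝ≥0) : Good (fun σ => g (σ v)) := by
  refine ⟨fun w b => if w = v then g b else 1, Set.univ, isAffineSet_univ, fun σ => ?_⟩
  simp [Finset.prod_ite_eq']

open Classical in
theorem good_pair {n : ℕ} (v w : Fin n) (R : Set (Bool × Bool)) (hR : IsAffine2 R) :
    Good (fun σ => if (σ v, σ w) ∈ R then 1 else 0) := by
  obtain ⟨m, a, b, c, rfl⟩ := hR
  refine ⟨fun _ _ => 1, _, ⟨m, fun i j => (if j = v then a i else 0) + (if j = w then b i else 0),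
    c, rfl⟩, fun σ => ?_⟩
  simp [add_mul, Finset.sum_add_distrib]

theorem good_csp {n : ℕ} (H : CSPInstance n)
    (hH : ∀ c ∈ H, InAF c.2.1 ∨ c.1 = 1) : Good (cspMeasure H) := by
  induction H with
  | nil => exact good_one
  | cons c H ih =>
    have h1 := ih (fun d hd => hH d (List.mem_cons_of_mem _ hd))
    have h2 : cspMeasure (c :: H) =
        fun σ => (c.2.1 fun j => σ (c.2.2 j)) * cspMeasure H σ := by
      funext σ
      simp [cspMeasure]
    rw [h2]
    refine good_mul ?_ h1
    rcases hH c List.mem_cons_self with h | h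
    · obtain ⟨u, i, R, hR, hf⟩ := h
      simp only [hf]
      exact good_mul (good_prod _ _ fun j => good_unary _ _)
        (good_prod _ _ fun j => good_pair _ _ _ (hR j))
    · obtain ⟨k, f, x⟩ := c
      simp only at h
      subst h
      have h3 : (fun σ : Fin n → Bool => f fun j => σ (x j)) =
          fun σ => (fun b => f fun _ => b) (σ (x 0)) := by
        funext σ
        congr 1
        funext j
        rw [Subsingleton.elim j 0]
      exact h3 ▸ good_unary (x 0) (fun b => f fun _ => b)

open Classical in
/-- If every constraint of a MAX-PROD-CSP instance belongs to AF or is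
unary, then the measure factors as the indicator of an affine subset `A ⊆ GF(2)^V` times a
product of unary functions, one for each variable. -/
theorem stmt9 {n : ℕ} (H : CSPInstance n)
    (hH : ∀ c ∈ H, InAF c.2.1 ∨ c.1 = 1) :
    ∃ (u : Fin n → Bool → ℝ≥0) (A : Set (Fin n → ZMod 2)), IsAffineSet A ∧
      ∀ σ : Fin n → Bool,
        cspMeasure H σ
          = (if (fun v => boolZ (σ v)) ∈ A then 1 else 0) * ∏ v, u v (σ v) := by
  exact good_csp H hH
end

section
/- Let H be a MAX-PROD-CSP instance over a finite set V of Boolean variables all of whose constraints belong to ED or are unary. Then there exist a family of unary functions u_v : {0,1} → ℝ_{≥0} (v ∈ V) and a finite set T of triples (p,q,c) ∈ V × V × GF(2) such that for every assignment σ : V → {0,1}: m(σ) = ∏_{v∈V} u_v(σ(v)) if σ(p) ⊕ σ(q) = c holds for every (p,q,c) ∈ T, and m(σ) = 0 otherwise. -/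
open scoped NNReal

/-- The class ED: products of unary constraints and of binary equality (`c = false`) and
disequality (`c = true`) constraints, each factor applied to some of the variables. -/
def InED {k : ℕ} (f : (Fin k → Bool) → ℝ≥0) : Prop :=
  ∃ (U : List (Fin k × (Bool → ℝ≥0))) (B : List (Fin k × Fin k × Bool)),
    ∀ x : Fin k → Bool,
      f x = (U.map fun t => t.2 (x t.1)).prod *
        (B.map fun t => if xor (x t.1) (x t.2.1) = t.2.2 then (1 : ℝ≥0) else 0).prod

/-- Functions of the normal form in the theorem. -/
def GoodForm {n : ℕ} (m : (Fin n → Bool) → ℝ≥0) : Prop :=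
  ∃ (u : Fin n → Bool → ℝ≥0) (T : Finset (Fin n × Fin n × ZMod 2)),
    ∀ σ : Fin n → Bool,
      m σ = if ∀ t ∈ T, boolZ (σ t.1) + boolZ (σ t.2.1) = t.2.2
            then ∏ v, u v (σ v) else 0

theorem goodForm_one {n : ℕ} : GoodForm (fun _ : Fin n → Bool => (1 : ℝ≥0)) :=
  ⟨fun _ _ => 1, ∅, fun σ => by simp⟩

theorem goodForm_mul {n : ℕ} {f g : (Fin n → Bool) → ℝ≥0} (hf : GoodForm f)
    (hg : GoodForm g) : GoodForm (fun σ => f σ * g σ) := by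
  classical
  obtain ⟨u, S, hu⟩ := hf
  obtain ⟨w, T, hw⟩ := hg
  refine ⟨fun v b => u v b * w v b, S ∪ T, fun σ => ?_⟩
  have key : (∀ t ∈ S ∪ T, boolZ (σ t.1) + boolZ (σ t.2.1) = t.2.2) ↔
      (∀ t ∈ S, boolZ (σ t.1) + boolZ (σ t.2.1) = t.2.2) ∧
      (∀ t ∈ T, boolZ (σ t.1) + boolZ (σ t.2.1) = t.2.2) := by
    constructor
    · intro h
      exact ⟨fun t ht => h t (Finset.mem_union_left _ ht),
        fun t ht => h t (Finset.mem_union_right _ ht)⟩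
    · rintro ⟨h1, h2⟩ t ht
      rcases Finset.mem_union.1 ht with h | h
      · exact h1 t h
      · exact h2 t h
  simp only [hu, hw, Finset.prod_mul_distrib]
  by_cases h1 : ∀ t ∈ S, boolZ (σ t.1) + boolZ (σ t.2.1) = t.2.2
  · by_cases h2 : ∀ t ∈ T, boolZ (σ t.1) + boolZ (σ t.2.1) = t.2.2
    · rw [if_pos h1, if_pos h2, if_pos (key.2 ⟨h1, h2⟩)]
    · rw [if_neg h2, if_neg (fun h => h2 (key.1 h).2), mul_zero]
  · rw [if_neg h1, if_neg (fun h => h1 (key.1 h).1), zero_mul]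

theorem goodForm_unary {n : ℕ} (p : Fin n) (g : Bool → ℝ≥0) :
    GoodForm (fun σ : Fin n → Bool => g (σ p)) := by
  classical
  refine ⟨fun v b => if v = p then g b else 1, ∅, fun σ => ?_⟩
  simp

theorem goodForm_binary {n : ℕ} (p q : Fin n) (c : Bool) :
    GoodForm (fun σ : Fin n → Bool => if xor (σ p) (σ q) = c then (1 : ℝ≥0) else 0) := by
  refine ⟨fun _ _ => 1, {(p, q, boolZ c)}, fun σ => ?_⟩
  have key : ∀ a b c : Bool, (boolZ a + boolZ b = boolZ c) ↔ xor a b = c := by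
    unfold boolZ
    decide
  simp [key]

theorem goodForm_list {n : ℕ} {α : Type*} (L : List α) (F : α → (Fin n → Bool) → ℝ≥0)
    (h : ∀ a ∈ L, GoodForm (F a)) : GoodForm (fun σ => (L.map fun a => F a σ).prod) := by
  induction L with
  | nil => simpa using goodForm_one
  | cons a L ih =>
    simp only [List.map_cons, List.prod_cons]
    exact goodForm_mul (h a (by simp)) (ih fun b hb => h b (by simp [hb]))

/-- If every constraint of a MAX-PROD-CSP instance belongs to ED or is
unary, then there are unary functions `u_v` and a finite set `T` of parity constraints
`(p,q,c) ∈ V × V × GF(2)` such that the measure of `σ` equals `∏_v u_v(σ v)` when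
`σ p ⊕ σ q = c` for every `(p,q,c) ∈ T`, and `0` otherwise. -/
theorem stmt10 {n : ℕ} (H : CSPInstance n)
    (hH : ∀ c ∈ H, InED c.2.1 ∨ c.1 = 1) :
    ∃ (u : Fin n → Bool → ℝ≥0) (T : Finset (Fin n × Fin n × ZMod 2)),
      ∀ σ : Fin n → Bool,
        cspMeasure H σ
          = if ∀ t ∈ T, boolZ (σ t.1) + boolZ (σ t.2.1) = t.2.2
            then ∏ v, u v (σ v) else 0 := by
  refine goodForm_list H (fun c σ => c.2.1 fun j => σ (c.2.2 j)) ?_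
  rintro ⟨k, f, x⟩ hc
  rcases hH _ hc with ⟨U, B, h⟩ | h
  · simp only at h
    simp only [h]
    exact goodForm_mul
      (goodForm_list U (fun t σ => t.2 (σ (x t.1))) fun t _ => goodForm_unary _ _)
      (goodForm_list B
        (fun t σ => if xor (σ (x t.1)) (σ (x t.2.1)) = t.2.2 then (1 : ℝ≥0) else 0)
        fun t _ => goodForm_binary _ _ _)
  · simp only at h
    subst h
    have e : (fun σ : Fin n → Bool => f fun j => σ (x j)) =
        fun σ => (fun b => f fun _ => b) (σ (x 0)) := by
      funext σ
      show f _ = f _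
      congr 1
      funext j
      rw [Subsingleton.elim j 0]
    show GoodForm (fun σ : Fin n → Bool => f fun j => σ (x j))
    rw [e]
    exact goodForm_unary (x 0) (fun b => f fun _ => b)
end
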